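/- Assume additionally that Q is positive definite (σ₁ > 0 and σ₁σ₃ − σ₂² > 0). Then for every h ∈ ℤ and every positive integer k with gcd(h,k) = 1, the series Σ_{j∈{1,2}} (−1)^{j+1} Σ_{α∈𝒮_j} Σ_{n∈ℕ₀²} e^{2πi(h/k)·L·Q(n+α)} e^{−t·L·Q(n+α)} converges absolutely for every t > 0 and has a finite limit as t → 0⁺; that is, the series 𝒵_{Q,r,s}(q) := Σ_{j∈{1,2}} (−1)^{j+1} Σ_{α∈𝒮_j} Σ_{n∈ℕ₀²} q^{L·Q(n+α)} has a finite radial limit as q approaches the root of unity e^{2πih/k}. -/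

import Mathlib

open Complex Filter Topology

/-- `e(x) = e^{2πix}` for rational `x`. -/
noncomputable def eQ (x : ℚ) : ℂ := Complex.exp (2 * Real.pi * Complex.I * (x : ℂ))

/-- The two points `x/N` and `1 - x/N = (N-x)/N`. -/
noncomputable def pt (x N : ℕ) : Fin 2 → ℚ := ![(x : ℚ) / N, 1 - (x : ℚ) / N]

/-!
After shifting by the periods of the phase, the alternating sum of theta series is one sum over
the lattice `ℕ²` of `e^{-tP}` with periodic coefficients, where `P` is a positive definite form.
If the sum of the coefficients over a period and their two first moments vanish, a second order
Taylor expansion of the Gaussian turns the sum into a Riemann sum, and the limit at `t → 0⁺` is an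
integral.

The coefficient sums are Gauss sums. They depend on a residue `r` modulo `N` only through `r²`
modulo `2N`: either a translation of the summation variable matches the two sums, or `4 ∣ k` or an
odd prime `p` divides both `k` and `N`, and then a shift by `k / 4` or `k / p` shows that both sums
vanish. So the alternating signs cancel all sums against each other. The first moments cancel in
pairs under the reflection `α ↦ 1 - α`.
-/

section BinaryForm

/-- The binary quadratic form `A x² + B x y + C y²`. -/
def binaryForm {R : Type*} [CommRing R] (A B C x y : R) : R :=
  A * x ^ 2 + B * x * y + C * y ^ 2

/-- The polar form of `binaryForm A B C`, as a linear form in `(x, y)`. -/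
def polarForm {R : Type*} [CommRing R] (A B C a b x y : R) : R :=
  (2 * A * a + B * b) * x + (B * a + 2 * C * b) * y

/-- Positive definiteness of `binaryForm A B C`, expressed by leading coefficient and
discriminant. -/
structure IsPosDefBinary (A B C : ℝ) : Prop where
  pos : 0 < A
  discrim_neg : discrim A B C < 0

theorem binaryForm_add_add {R : Type*} [CommRing R] (A B C x y a b : R) :
    binaryForm A B C (x + a) (y + b) =
      binaryForm A B C x y + polarForm A B C a b x y + binaryForm A B C a b := by
  unfold binaryForm polarForm; ring

theorem binaryForm_mul_mul {R : Type*} [CommRing R] (A B C r x y : R) :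
    binaryForm A B C (r * x) (r * y) = r ^ 2 * binaryForm A B C x y := by
  unfold binaryForm; ring

theorem polarForm_mul_mul_left {R : Type*} [CommRing R] (A B C r a b x y : R) :
    polarForm A B C (r * a) (r * b) x y = r * polarForm A B C a b x y := by
  unfold polarForm; ring

theorem smul_binaryForm {R : Type*} [CommRing R] (A B C r x y : R) :
    binaryForm (r * A) (r * B) (r * C) x y = r * binaryForm A B C x y := by
  unfold binaryForm; ring

theorem abs_polarForm_le (A B C a b : ℝ) {x y : ℝ} (hx : 0 ≤ x) (hy : 0 ≤ y) :
    |polarForm A B C a b x y| ≤ (|2 * A * a + B * b| + |B * a + 2 * C * b|) * (x + y) := by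
  calc |polarForm A B C a b x y|
      ≤ |2 * A * a + B * b| * x + |B * a + 2 * C * b| * y := by
        rw [← abs_of_nonneg hx, ← abs_of_nonneg hy, ← abs_mul, ← abs_mul, abs_of_nonneg hx,
          abs_of_nonneg hy]
        exact abs_add_le _ _
    _ ≤ _ := by
        nlinarith [mul_nonneg (abs_nonneg (2 * A * a + B * b)) hy,
          mul_nonneg (abs_nonneg (B * a + 2 * C * b)) hx]

namespace IsPosDefBinary

variable {A B C : ℝ}

theorem of_mul_sub_sq_pos {b : ℝ} (hA : 0 < A) (hD : 0 < A * C - b ^ 2) :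
    IsPosDefBinary A (2 * b) C where
  pos := hA
  discrim_neg := by unfold discrim; linarith

theorem mul_left (hP : IsPosDefBinary A B C) {r : ℝ} (hr : 0 < r) :
    IsPosDefBinary (r * A) (r * B) (r * C) where
  pos := mul_pos hr hP.pos
  discrim_neg := by
    have hD : discrim (r * A) (r * B) (r * C) = r ^ 2 * discrim A B C := by
      unfold discrim; ring
    rw [hD]
    exact mul_neg_of_pos_of_neg (by positivity) hP.discrim_neg

theorem exists_le_binaryForm (hP : IsPosDefBinary A B C) :
    ∃ c > 0, ∀ x y, c * (x ^ 2 + y ^ 2) ≤ binaryForm A B C x y := by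
  have hA := hP.pos
  have hD : 0 < 4 * A * C - B ^ 2 := by linarith [hP.discrim_neg, discrim.eq_1 A B C]
  have hC : 0 < C := pos_of_mul_pos_right (by nlinarith [sq_nonneg B] : 0 < A * C) hA.le
  set c := (4 * A * C - B ^ 2) / (4 * (A + C)) with hc
  have hcAC : 4 * c * (A + C) = 4 * A * C - B ^ 2 := by rw [hc]; field_simp
  have hcA : c < A := by rw [hc, div_lt_iff₀ (by positivity)]; nlinarith [sq_nonneg B]
  refine ⟨c, by positivity, fun x y => ?_⟩
  have hsq : 4 * (A - c) * ((A - c) * x ^ 2 + B * x * y + (C - c) * y ^ 2) =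
      (2 * (A - c) * x + B * y) ^ 2 + (2 * c * y) ^ 2 := by
    linear_combination (-y ^ 2) * hcAC
  have hnonneg : 0 ≤ (A - c) * x ^ 2 + B * x * y + (C - c) * y ^ 2 :=
    nonneg_of_mul_nonneg_right (hsq ▸ by positivity) (by linarith : 0 < 4 * (A - c))
  unfold binaryForm
  linarith

theorem exists_mul_abs_sub_binaryForm_le (hP : IsPosDefBinary A B C) (M : ℝ) :
    ∃ K, ∀ x y, M * (|x| + |y|) - binaryForm A B C x y ≤ K := by
  obtain ⟨c, hc, hle⟩ := hP.exists_le_binaryForm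
  refine ⟨M ^ 2 / (2 * c), fun x y => ?_⟩
  have hx : 0 ≤ c * (|x| - M / (2 * c)) ^ 2 := by positivity
  have hy : 0 ≤ c * (|y| - M / (2 * c)) ^ 2 := by positivity
  have hsq : c * (|x| - M / (2 * c)) ^ 2 + c * (|y| - M / (2 * c)) ^ 2 =
      c * (x ^ 2 + y ^ 2) - M * (|x| + |y|) + M ^ 2 / (2 * c) := by
    rw [← sq_abs x, ← sq_abs y]; field_simp; ring
  linarith [hle x y]

theorem summable_exp_neg (hP : IsPosDefBinary A B C) (α β : ℝ) :
    Summable fun n : ℕ × ℕ => Real.exp (-binaryForm A B C (n.1 + α) (n.2 + β)) := by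
  obtain ⟨K, hK⟩ := hP.exists_mul_abs_sub_binaryForm_le 1
  have hgeom : Summable fun n : ℕ × ℕ => Real.exp (-n.1) * Real.exp (-n.2) :=
    Real.summable_exp_neg_nat.mul_of_nonneg Real.summable_exp_neg_nat
      (fun _ => (Real.exp_pos _).le) fun _ => (Real.exp_pos _).le
  refine (hgeom.mul_left (Real.exp (K - α - β))).of_nonneg_of_le
    (fun _ => (Real.exp_pos _).le) fun n => ?_
  rw [← Real.exp_add, ← Real.exp_add, Real.exp_le_exp]
  linarith [hK (n.1 + α) (n.2 + β), le_abs_self (n.1 + α), le_abs_self (n.2 + β)]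

theorem summable_mul_exp_neg (hP : IsPosDefBinary A B C) (α β : ℝ) {φ : ℕ × ℕ → ℂ} {M : ℝ}
    (hφ : ∀ n, ‖φ n‖ ≤ M) {t : ℝ} (ht : 0 < t) :
    Summable fun n : ℕ × ℕ =>
      ‖φ n * (Real.exp (-t * binaryForm A B C (n.1 + α) (n.2 + β)) : ℂ)‖ := by
  refine (((hP.mul_left ht).summable_exp_neg α β).mul_left M).of_nonneg_of_le
    (fun _ => norm_nonneg _) fun n => ?_
  rw [norm_mul, Complex.norm_real, Real.norm_eq_abs, Real.abs_exp, smul_binaryForm, neg_mul]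
  gcongr
  exact hφ n

end IsPosDefBinary

end BinaryForm

section ExpRemainder

/-- The entire function `(exp u - 1 - u) / u²`, with its value `1 / 2` at `u = 0`. -/
noncomputable def expRemainder : ℝ → ℝ := dslope (dslope Real.exp 0) 0

theorem exp_eq_one_add_add_sq_mul_expRemainder (u : ℝ) :
    Real.exp u = 1 + u + u ^ 2 * expRemainder u := by
  have h₁ := sub_smul_dslope Real.exp 0 u
  have h₂ := sub_smul_dslope (dslope Real.exp 0) 0 u
  simp only [sub_zero, smul_eq_mul, Real.exp_zero, dslope_same, Real.deriv_exp] at h₁ h₂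
  unfold expRemainder
  linear_combination -h₁ - u * h₂

theorem continuous_expRemainder : Continuous expRemainder := by
  have hexp : Continuous (dslope Real.exp 0) := by
    rw [← continuousOn_univ, continuousOn_dslope univ_mem]
    exact ⟨Real.continuous_exp.continuousOn, Real.differentiableAt_exp⟩
  rw [← continuousOn_univ, expRemainder, continuousOn_dslope univ_mem]
  obtain ⟨p, hp⟩ := analyticAt_rexp (x := 0)
  exact ⟨hexp.continuousOn, hp.has_fpower_series_dslope_fslope.differentiableAt⟩

theorem abs_expRemainder_le (u : ℝ) : |expRemainder u| ≤ Real.exp |u| := by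
  have hclosed : IsClosed {u | |expRemainder u| ≤ Real.exp |u|} :=
    isClosed_le continuous_expRemainder.abs (Real.continuous_exp.comp continuous_abs)
  have hsub : ({0}ᶜ : Set ℝ) ⊆ {u | |expRemainder u| ≤ Real.exp |u|} := by
    intro u hu
    have hu2 : 0 < u ^ 2 := by positivity [Set.mem_compl_singleton_iff.1 hu]
    have h := Complex.norm_exp_sub_sum_le_norm_mul_exp u 2
    have hterm : Complex.exp u - ∑ m ∈ Finset.range 2, (u : ℂ) ^ m / m.factorial =
        ((u ^ 2 * expRemainder u : ℝ) : ℂ) := by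
      rw [← Complex.ofReal_exp, exp_eq_one_add_add_sq_mul_expRemainder]
      simp [Finset.sum_range_succ]
    rw [hterm, Complex.norm_real, Complex.norm_real, Real.norm_eq_abs, Real.norm_eq_abs, abs_mul,
      abs_of_pos hu2, sq_abs] at h
    exact le_of_mul_le_mul_left h hu2
  exact hclosed.closure_subset_iff.2 hsub (dense_compl_singleton (0 : ℝ) u)

theorem abs_sq_mul_expRemainder_sub_le {b δ p v : ℝ} (hv : |v| ≤ b) (hp : |p| ≤ b) (hδ : |δ| ≤ 1) :
    |v ^ 2 * expRemainder (-(δ * v)) - p| ≤ 3 * Real.exp (2 * b) := by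
  have hb : 0 ≤ b := (abs_nonneg v).trans hv
  have hquad := Real.quadratic_le_exp_of_nonneg hb
  have hrem : |expRemainder (-(δ * v))| ≤ Real.exp b := by
    refine (abs_expRemainder_le _).trans (Real.exp_le_exp.2 ?_)
    rw [abs_neg, abs_mul]
    nlinarith [abs_nonneg v, abs_nonneg δ]
  calc |v ^ 2 * expRemainder (-(δ * v)) - p|
      ≤ |v| ^ 2 * |expRemainder (-(δ * v))| + |p| := by
        rw [← abs_pow, ← abs_mul]; exact abs_sub _ _
    _ ≤ b ^ 2 * Real.exp b + b := by gcongr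
    _ ≤ (2 * Real.exp b) * Real.exp b + 1 * Real.exp b := by
        rw [one_mul]; gcongr <;> nlinarith
    _ ≤ (2 * Real.exp b) * Real.exp b + Real.exp b * Real.exp b := by
        gcongr; exact Real.one_le_exp hb
    _ = 3 * Real.exp (2 * b) := by rw [two_mul b, Real.exp_add]; ring

end ExpRemainder

section GaussianRemainder

/-- With `P = binaryForm A B C`, the second order Taylor remainder at `δ = 0` of
`exp (-P (x + δ a) (y + δ b))`, divided by `δ²`. -/
noncomputable def gaussianRemainder (A B C a b δ x y : ℝ) : ℝ :=
  Real.exp (-binaryForm A B C x y) *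
    ((polarForm A B C a b x y + δ * binaryForm A B C a b) ^ 2 *
      expRemainder (-(δ * (polarForm A B C a b x y + δ * binaryForm A B C a b))) -
        binaryForm A B C a b)

theorem exp_neg_binaryForm_add_mul (A B C a b δ x y : ℝ) :
    Real.exp (-binaryForm A B C (x + δ * a) (y + δ * b)) =
      Real.exp (-binaryForm A B C x y) * (1 - δ * polarForm A B C a b x y) +
        δ ^ 2 * gaussianRemainder A B C a b δ x y := by
  have hsplit : -binaryForm A B C (x + δ * a) (y + δ * b) = -binaryForm A B C x y +
      -(δ * (polarForm A B C a b x y + δ * binaryForm A B C a b)) := by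
    rw [binaryForm_add_add, binaryForm_mul_mul, polarForm_mul_mul_left]; ring
  rw [hsplit, Real.exp_add, exp_eq_one_add_add_sq_mul_expRemainder (-(δ * _)), gaussianRemainder]
  ring

theorem continuous_gaussianRemainder (A B C a b : ℝ) :
    Continuous fun z : ℝ × ℝ × ℝ => gaussianRemainder A B C a b z.1 z.2.1 z.2.2 := by
  have := continuous_expRemainder
  unfold gaussianRemainder polarForm binaryForm
  fun_prop

theorem IsPosDefBinary.exists_abs_gaussianRemainder_le {A B C : ℝ} (hP : IsPosDefBinary A B C)
    (a b : ℝ) : ∃ K, ∀ δ x y, |δ| ≤ 1 → 0 ≤ x → 0 ≤ y →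
      |gaussianRemainder A B C a b δ x y| ≤ K * Real.exp (-(x + y)) := by
  set p := binaryForm A B C a b
  set M := |2 * A * a + B * b| + |B * a + 2 * C * b|
  have hM : 0 ≤ M := by positivity
  obtain ⟨K, hK⟩ := hP.exists_mul_abs_sub_binaryForm_le (2 * M + 1)
  refine ⟨3 * Real.exp (K + 2 * |p|), fun δ x y hδ hx hy => ?_⟩
  set v := polarForm A B C a b x y + δ * p
  have hv : |v| ≤ M * (x + y) + |p| := by
    refine (abs_add_le _ _).trans (add_le_add (abs_polarForm_le A B C a b hx hy) ?_)
    rw [abs_mul]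
    exact mul_le_of_le_one_left (abs_nonneg p) hδ
  have hp : |p| ≤ M * (x + y) + |p| := le_add_of_nonneg_left (mul_nonneg hM (add_nonneg hx hy))
  rw [gaussianRemainder, abs_mul, Real.abs_exp]
  calc Real.exp (-binaryForm A B C x y) * |v ^ 2 * expRemainder (-(δ * v)) - p|
      ≤ Real.exp (-binaryForm A B C x y) * (3 * Real.exp (2 * (M * (x + y) + |p|))) := by
        gcongr; exact abs_sq_mul_expRemainder_sub_le hv hp hδ
    _ = 3 * Real.exp (-binaryForm A B C x y + 2 * (M * (x + y) + |p|)) := by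
        rw [Real.exp_add]; ring
    _ ≤ 3 * Real.exp (K + 2 * |p| + -(x + y)) := by
        have := hK x y
        rw [abs_of_nonneg hx, abs_of_nonneg hy] at this
        gcongr 3 * Real.exp ?_
        linarith
    _ = 3 * Real.exp (K + 2 * |p|) * Real.exp (-(x + y)) := by rw [Real.exp_add]; ring

end GaussianRemainder

section RiemannSum

open MeasureTheory

variable {E : Type*} [NormedAddCommGroup E] [NormedSpace ℝ E] [CompleteSpace E]

/-- The closed first quadrant of the plane. -/
def quadrant : Set (ℝ × ℝ) := Set.Ici 0 ×ˢ Set.Ici 0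

/-- The lower left corner of the cell of the lattice of mesh `ε` that contains a point of the
quadrant, in units of `ε`. -/
noncomputable def cellIndex (ε : ℝ) (z : ℝ × ℝ) : ℕ × ℕ := (⌊ε⁻¹ * z.1⌋₊, ⌊ε⁻¹ * z.2⌋₊)

theorem measurableSet_quadrant : MeasurableSet quadrant := measurableSet_Ici.prod measurableSet_Ici

theorem measurable_cellIndex (ε : ℝ) : Measurable (cellIndex ε) :=
  (Nat.measurable_floor.comp (measurable_fst.const_mul _)).prodMk
    (Nat.measurable_floor.comp (measurable_snd.const_mul _))

theorem quadrant_inter_cellIndex_preimage {ε : ℝ} (hε : 0 < ε) (m : ℕ × ℕ) :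
    quadrant ∩ cellIndex ε ⁻¹' {m} =
      Set.Ico (ε * m.1) (ε * (m.1 + 1)) ×ˢ Set.Ico (ε * m.2) (ε * (m.2 + 1)) := by
  have hIco (n : ℕ) (x : ℝ) :
      x ∈ Set.Ico (ε * n) (ε * (n + 1)) ↔ 0 ≤ x ∧ ⌊ε⁻¹ * x⌋₊ = n := by
    rw [Set.mem_Ico]
    constructor
    · rintro ⟨h₁, h₂⟩
      have hx : 0 ≤ x := le_trans (by positivity) h₁
      rw [Nat.floor_eq_iff (by positivity), le_inv_mul_iff₀ hε, inv_mul_lt_iff₀ hε]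
      exact ⟨hx, h₁, h₂⟩
    · rintro ⟨hx, h⟩
      rwa [Nat.floor_eq_iff (by positivity), le_inv_mul_iff₀ hε, inv_mul_lt_iff₀ hε] at h
  ext z
  simp only [quadrant, cellIndex, Set.mem_inter_iff, Set.mem_prod, Set.mem_Ici, Set.mem_preimage,
    Set.mem_singleton_iff, Prod.ext_iff, hIco]
  tauto

theorem setIntegral_quadrant_cellIndex {ε : ℝ} (hε : 0 < ε) (G : ℕ × ℕ → E)
    (hG : IntegrableOn (fun z => G (cellIndex ε z)) quadrant) :
    ∫ z in quadrant, G (cellIndex ε z) = ε ^ 2 • ∑' m, G m := by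
  have hunion : quadrant = ⋃ m, quadrant ∩ cellIndex ε ⁻¹' {m} := by
    rw [← Set.inter_iUnion, ← Set.preimage_iUnion, Set.iUnion_of_singleton, Set.preimage_univ,
      Set.inter_univ]
  have hmeas (m : ℕ × ℕ) : MeasurableSet (quadrant ∩ cellIndex ε ⁻¹' {m}) :=
    measurableSet_quadrant.inter (measurable_cellIndex ε (measurableSet_singleton m))
  have hdisj : Pairwise (Function.onFun Disjoint fun m => quadrant ∩ cellIndex ε ⁻¹' {m}) :=
    fun m m' hne => ((Set.disjoint_singleton.2 hne).preimage _).mono Set.inter_subset_right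
      Set.inter_subset_right
  rw [hunion] at hG ⊢
  rw [← (hasSum_integral_iUnion hmeas hdisj hG).tsum_eq, ← tsum_const_smul'']
  congr 1 with m
  have hconst : ∫ z in quadrant ∩ cellIndex ε ⁻¹' {m}, G (cellIndex ε z) =
      ∫ _ in quadrant ∩ cellIndex ε ⁻¹' {m}, G m :=
    setIntegral_congr_fun (hmeas m) fun z hz => congrArg G hz.2
  have hvol : volume.real (quadrant ∩ cellIndex ε ⁻¹' {m}) = ε ^ 2 := by
    rw [quadrant_inter_cellIndex_preimage hε, Measure.volume_eq_prod, measureReal_prod_prod,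
      Real.volume_real_Ico_of_le (by gcongr; linarith),
      Real.volume_real_Ico_of_le (by gcongr; linarith)]
    ring
  rw [hconst, setIntegral_const, hvol]

theorem integrableOn_quadrant_exp_neg :
    IntegrableOn (fun z : ℝ × ℝ => Real.exp (-(z.1 + z.2))) quadrant := by
  have hexp : IntegrableOn (fun x : ℝ => Real.exp (-x)) (Set.Ici 0) :=
    (integrableOn_Ici_iff_integrableOn_Ioi).2 (integrableOn_exp_neg_Ioi 0)
  have hprod := hexp.integrable.mul_prod hexp.integrable
  rw [Measure.prod_restrict, ← Measure.volume_eq_prod] at hprod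
  simpa only [IntegrableOn, quadrant, neg_add, Real.exp_add] using hprod

/-- The point `ε m` of the lattice of mesh `ε`. -/
def latticePoint (ε : ℝ) (m : ℕ × ℕ) : ℝ × ℝ := (ε * m.1, ε * m.2)

theorem latticePoint_mem_quadrant {ε : ℝ} (hε : 0 ≤ ε) (m : ℕ × ℕ) :
    latticePoint ε m ∈ quadrant :=
  ⟨mul_nonneg hε m.1.cast_nonneg, mul_nonneg hε m.2.cast_nonneg⟩

theorem sub_le_mul_floor_inv_mul {ε : ℝ} (hε : 0 < ε) (x : ℝ) : x - ε ≤ ε * ⌊ε⁻¹ * x⌋₊ := by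
  have h := (inv_mul_lt_iff₀ hε).1 (Nat.lt_floor_add_one (ε⁻¹ * x))
  linarith

theorem tendsto_mul_floor_inv_mul {x : ℝ} (hx : 0 ≤ x) :
    Tendsto (fun ε : ℝ => ε * ⌊ε⁻¹ * x⌋₊) (𝓝[>] 0) (𝓝 x) := by
  refine ((tendsto_nat_floor_mul_div_atTop hx).comp tendsto_inv_nhdsGT_zero).congr fun ε => ?_
  rw [Function.comp_apply, div_inv_eq_mul, mul_comm, mul_comm x]

theorem tendsto_riemannSum_quadrant {H : ℝ → ℝ × ℝ → E} {K : ℝ}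
    (hH : Continuous (Function.uncurry H))
    (hK : ∀ ε, |ε| ≤ 1 → ∀ z ∈ quadrant, ‖H ε z‖ ≤ K * Real.exp (-(z.1 + z.2))) :
    Tendsto (fun ε : ℝ => ε ^ 2 • ∑' m, H ε (latticePoint ε m)) (𝓝[>] 0)
      (𝓝 (∫ z in quadrant, H 0 z)) := by
  let F (ε : ℝ) (z : ℝ × ℝ) : E := H ε (latticePoint ε (cellIndex ε z))
  let bound (z : ℝ × ℝ) : ℝ := K * Real.exp 2 * Real.exp (-(z.1 + z.2))
  have hK₀ : 0 ≤ K := by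
    simpa using (norm_nonneg _).trans (hK 0 (by simp) 0 ⟨Set.self_mem_Ici, Set.self_mem_Ici⟩)
  have hsmall : ∀ᶠ ε : ℝ in 𝓝[>] 0, 0 < ε ∧ ε ≤ 1 := Ioc_mem_nhdsGT zero_lt_one
  have hmeas (ε : ℝ) : AEStronglyMeasurable (F ε) (volume.restrict quadrant) :=
    ((StronglyMeasurable.of_discrete (f := fun m => H ε (latticePoint ε m))).comp_measurable
      (measurable_cellIndex ε)).aestronglyMeasurable
  have hbound {ε : ℝ} (hε : 0 < ε ∧ ε ≤ 1) : ∀ᵐ z ∂volume.restrict quadrant, ‖F ε z‖ ≤ bound z := by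
    refine Eventually.of_forall fun z => ?_
    refine (hK ε (abs_le.2 ⟨by linarith, hε.2⟩) _ (latticePoint_mem_quadrant hε.1.le _)).trans ?_
    simp only [bound]
    rw [mul_assoc, ← Real.exp_add]
    gcongr K * Real.exp ?_
    have h₁ := sub_le_mul_floor_inv_mul hε.1 z.1
    have h₂ := sub_le_mul_floor_inv_mul hε.1 z.2
    simp only [latticePoint, cellIndex]
    linarith
  have hboundInt : Integrable bound (volume.restrict quadrant) :=
    integrableOn_quadrant_exp_neg.integrable.const_mul _
  have hlim : ∀ᵐ z ∂volume.restrict quadrant,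
      Tendsto (fun ε => F ε z) (𝓝[>] 0) (𝓝 (H 0 z)) := by
    refine (ae_restrict_iff' measurableSet_quadrant).2 (Eventually.of_forall fun z hz => ?_)
    exact (hH.tendsto (0, z)).comp (tendsto_nhdsWithin_of_tendsto_nhds tendsto_id |>.prodMk_nhds <|
      (tendsto_mul_floor_inv_mul hz.1).prodMk_nhds (tendsto_mul_floor_inv_mul hz.2))
  refine (tendsto_integral_filter_of_dominated_convergence bound (Eventually.of_forall hmeas)
    (hsmall.mono fun ε hε => hbound hε) hboundInt hlim).congr' (hsmall.mono fun ε hε => ?_)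
  exact setIntegral_quadrant_cellIndex hε.1 (fun m => H ε (latticePoint ε m))
    (hboundInt.mono' (hmeas ε) (hbound hε))

end RiemannSum

section MomentExpansion

theorem tendsto_sqrt_nhdsGT_zero : Tendsto Real.sqrt (𝓝[>] 0) (𝓝[>] 0) :=
  tendsto_nhdsWithin_iff.2 ⟨tendsto_nhdsWithin_of_tendsto_nhds
    (by simpa using Real.continuous_sqrt.tendsto 0),
    eventually_nhdsWithin_of_forall fun _ => Real.sqrt_pos.2⟩

variable {ι : Type*} [Fintype ι] {A B C : ℝ}

theorem sum_mul_exp_neg_binaryForm (A B C δ x y : ℝ) {w : ι → ℂ} {a b : ι → ℝ}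
    (h₀ : ∑ i, w i = 0) (h₁ : ∑ i, w i * a i = 0) (h₂ : ∑ i, w i * b i = 0) :
    ∑ i, w i * (Real.exp (-binaryForm A B C (x + δ * a i) (y + δ * b i)) : ℂ) =
      δ ^ 2 * ∑ i, w i * (gaussianRemainder A B C (a i) (b i) δ x y : ℂ) := by
  have hterm (i : ι) : w i * (Real.exp (-binaryForm A B C (x + δ * a i) (y + δ * b i)) : ℂ) =
      δ ^ 2 * (w i * (gaussianRemainder A B C (a i) (b i) δ x y : ℂ)) +
        (Real.exp (-binaryForm A B C x y) : ℂ) *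
          (w i - δ * (2 * A * x + B * y) * (w i * a i) -
            δ * (B * x + 2 * C * y) * (w i * b i)) := by
    rw [exp_neg_binaryForm_add_mul, polarForm]
    push_cast
    ring
  rw [Finset.sum_congr rfl fun i _ => hterm i, Finset.sum_add_distrib, ← Finset.mul_sum,
    ← Finset.mul_sum, Finset.sum_sub_distrib, Finset.sum_sub_distrib, ← Finset.mul_sum,
    ← Finset.mul_sum, h₀, h₁, h₂]
  simp

theorem IsPosDefBinary.exists_tendsto_tsum_sum_of_moments_eq_zero (hP : IsPosDefBinary A B C)
    {w : ι → ℂ} {a b : ι → ℝ} (h₀ : ∑ i, w i = 0) (h₁ : ∑ i, w i * a i = 0)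
    (h₂ : ∑ i, w i * b i = 0) :
    ∃ c, Tendsto (fun t : ℝ => ∑' m : ℕ × ℕ, ∑ i,
      w i * (Real.exp (-t * binaryForm A B C (m.1 + a i) (m.2 + b i)) : ℂ)) (𝓝[>] 0) (𝓝 c) := by
  let H (δ : ℝ) (z : ℝ × ℝ) : ℂ :=
    ∑ i, w i * (gaussianRemainder A B C (a i) (b i) δ z.1 z.2 : ℂ)
  have hH : Continuous (Function.uncurry H) := continuous_finsetSum _ fun i _ =>
    continuous_const.mul (Complex.continuous_ofReal.comp (continuous_gaussianRemainder ..))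
  choose K hK using fun i => hP.exists_abs_gaussianRemainder_le (a i) (b i)
  have hbound : ∀ δ, |δ| ≤ 1 → ∀ z ∈ quadrant,
      ‖H δ z‖ ≤ (∑ i, ‖w i‖ * K i) * Real.exp (-(z.1 + z.2)) := by
    intro δ hδ z hz
    refine (norm_sum_le _ _).trans ?_
    rw [Finset.sum_mul]
    refine Finset.sum_le_sum fun i _ => ?_
    rw [norm_mul, Complex.norm_real, Real.norm_eq_abs, mul_assoc]
    exact mul_le_mul_of_nonneg_left (hK i δ z.1 z.2 hδ hz.1 hz.2) (norm_nonneg _)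
  refine ⟨_, ((tendsto_riemannSum_quadrant hH hbound).comp tendsto_sqrt_nhdsGT_zero).congr'
    (eventually_nhdsWithin_of_forall fun t ht => ?_)⟩
  have ht₂ : t = √t ^ 2 := (Real.sq_sqrt (le_of_lt ht)).symm
  rw [Function.comp_apply, Complex.real_smul, ← tsum_mul_left]
  congr 1 with m
  have hscale (i : ι) : -t * binaryForm A B C (m.1 + a i) (m.2 + b i) =
      -binaryForm A B C (√t * m.1 + √t * a i) (√t * m.2 + √t * b i) := by
    rw [← mul_add, ← mul_add, binaryForm_mul_mul, ← ht₂, neg_mul]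
  simp only [hscale, sum_mul_exp_neg_binaryForm A B C _ _ _ h₀ h₁ h₂, H, latticePoint]
  push_cast
  rfl

end MomentExpansion

section Periodic

theorem hasSum_sum_residues {E : Type*} [AddCommMonoid E] [TopologicalSpace E] [ContinuousAdd E]
    [RegularSpace E] {k : ℕ} [NeZero k] {F : ℕ × ℕ → E} {s : E} (hF : HasSum F s) :
    HasSum (fun m : ℕ × ℕ => ∑ l : Fin k × Fin k, F (k * m.1 + l.1, k * m.2 + l.2)) s := by
  let e : (ℕ × ℕ) × (Fin k × Fin k) ≃ ℕ × ℕ :=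
    (Equiv.prodProdProdComm ℕ ℕ (Fin k) (Fin k)).trans
      ((Nat.divModEquiv k).symm.prodCongr (Nat.divModEquiv k).symm)
  have he (p) : e p = (k * p.1.1 + p.2.1, k * p.1.2 + p.2.2) := by
    simp [e, Equiv.prodProdProdComm, mul_comm k]
  refine (e.hasSum_iff.2 hF).prod_fiberwise fun m => ?_
  simpa only [Function.comp_apply, he] using
    hasSum_fintype fun l : Fin k × Fin k => (F ∘ e) (m, l)

theorem IsPosDefBinary.exists_tendsto_sum_tsum_of_periodic {ι : Type*} [Fintype ι] {A B C : ℝ}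
    (hP : IsPosDefBinary A B C) {k : ℕ} [NeZero k] {φ : ι → ℕ × ℕ → ℂ} {α β : ι → ℝ}
    (hφ : ∀ i n, φ i (n.1 % k, n.2 % k) = φ i n)
    (h₀ : ∑ i, ∑ l : Fin k × Fin k, φ i (l.1, l.2) = 0)
    (h₁ : ∑ i, ∑ l : Fin k × Fin k, φ i (l.1, l.2) * (l.1 + α i) = 0)
    (h₂ : ∑ i, ∑ l : Fin k × Fin k, φ i (l.1, l.2) * (l.2 + β i) = 0) :
    ∃ c, Tendsto (fun t : ℝ => ∑ i, ∑' n : ℕ × ℕ,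
      φ i n * (Real.exp (-t * binaryForm A B C (n.1 + α i) (n.2 + β i)) : ℂ)) (𝓝[>] 0) (𝓝 c) := by
  have hk : (0 : ℝ) < k := by exact_mod_cast NeZero.pos k
  have hbound (i : ι) (n : ℕ × ℕ) : ‖φ i n‖ ≤ ∑ l : Fin k × Fin k, ‖φ i (l.1, l.2)‖ := by
    rw [← hφ]
    exact Finset.single_le_sum (f := fun l : Fin k × Fin k => ‖φ i (l.1, l.2)‖)
      (fun _ _ => norm_nonneg _) (Finset.mem_univ (Fin.ofNat k n.1, Fin.ofNat k n.2))
  obtain ⟨c, hc⟩ := (hP.mul_left (pow_pos hk 2)).exists_tendsto_tsum_sum_of_moments_eq_zero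
    (ι := ι × Fin k × Fin k) (w := fun j => φ j.1 (j.2.1, j.2.2))
    (a := fun j => (j.2.1 + α j.1) / k) (b := fun j => (j.2.2 + β j.1) / k)
    (by rwa [Fintype.sum_prod_type])
    (by
      rw [Fintype.sum_prod_type, ← zero_div (k : ℂ), ← h₁]
      simp only [Finset.sum_div]
      push_cast
      simp only [mul_div_assoc])
    (by
      rw [Fintype.sum_prod_type, ← zero_div (k : ℂ), ← h₂]
      simp only [Finset.sum_div]
      push_cast
      simp only [mul_div_assoc])
  refine ⟨c, hc.congr' (eventually_nhdsWithin_of_forall fun t ht => ?_)⟩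
  have hsum (i : ι) :=
    hasSum_sum_residues (k := k) (hP.summable_mul_exp_neg (α i) (β i) (hbound i) ht).of_norm.hasSum
  refine Eq.trans ?_ (hasSum_sum fun i (_ : i ∈ Finset.univ) => hsum i).tsum_eq
  congr 1 with m
  rw [Fintype.sum_prod_type]
  refine Finset.sum_congr rfl fun i _ => Finset.sum_congr rfl fun l _ => ?_
  have hl (m : ℕ) (l : Fin k) : (k * m + l) % k = l := by
    rw [Nat.mul_add_mod, Nat.mod_eq_of_lt l.2]
  have harg (m : ℕ) (l : Fin k) (α : ℝ) : ((k * m + l : ℕ) : ℝ) + α = k * (m + (l + α) / k) := by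
    push_cast; field_simp; ring
  rw [← hφ i (k * m.1 + l.1, k * m.2 + l.2), smul_binaryForm, ← binaryForm_mul_mul]
  simp only [hl, harg]

end Periodic

section RootsOfUnity

theorem eQ_add (x y : ℚ) : eQ (x + y) = eQ x * eQ y := by
  unfold eQ
  rw [← Complex.exp_add]
  push_cast
  ring_nf

theorem eQ_eq_one_iff {x : ℚ} : eQ x = 1 ↔ ∃ n : ℤ, x = n := by
  rw [eQ, Complex.exp_eq_one_iff]
  refine exists_congr fun n => ?_
  rw [mul_comm, mul_left_inj' Complex.two_pi_I_ne_zero]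
  norm_cast

theorem eQ_add_intCast (x : ℚ) (n : ℤ) : eQ (x + n) = eQ x := by
  rw [eQ_add, eQ_eq_one_iff.2 ⟨n, rfl⟩, mul_one]

theorem norm_eQ (x : ℚ) : ‖eQ x‖ = 1 := by
  rw [eQ, mul_right_comm, ← Complex.norm_exp_ofReal_mul_I (2 * Real.pi * x)]
  push_cast
  rfl

end RootsOfUnity

theorem sum_fin_add_of_periodic {M : Type*} [AddCommMonoid M] [IsCancelAdd M] {k : ℕ}
    {ψ : ℤ → M} (hψ : Function.Periodic ψ k) (c : ℤ) :
    ∑ l : Fin k, ψ ((l : ℕ) + c) = ∑ l : Fin k, ψ (l : ℕ) := by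
  simp only [← Finset.sum_range (fun l => ψ ((l : ℤ) + c)), ← Finset.sum_range (fun l => ψ (l : ℤ))]
  have hstep (c : ℤ) :
      ∑ l ∈ Finset.range k, ψ (l + (c + 1)) = ∑ l ∈ Finset.range k, ψ (l + c) := by
    have hends : ψ ((k : ℕ) + c) = ψ ((0 : ℕ) + c) := by
      rw [add_comm, hψ, Nat.cast_zero, zero_add]
    have hsucc := (Finset.sum_range_succ (fun l : ℕ => ψ (l + c)) k).symm.trans
      (Finset.sum_range_succ' (fun l : ℕ => ψ (l + c)) k)
    rw [hends] at hsucc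
    simpa only [Nat.cast_succ, add_assoc, add_comm (1 : ℤ)] using (add_right_cancel hsucc).symm
  induction c using Int.induction_on with
  | zero => simp only [add_zero]
  | succ n ih => rw [hstep, ih]
  | pred n ih => rw [← ih, ← hstep, sub_add_cancel]

theorem gcd_two_mul_dvd_two_or (k N : ℤ) :
    Int.gcd k (2 * N) ∣ 2 ∨ 4 ∣ k ∨ ∃ p : ℤ, Prime p ∧ Odd p ∧ p ∣ k ∧ p ∣ N := by
  rcases Nat.eq_two_pow_or_exists_odd_prime_and_dvd (Int.gcd k (2 * N)) with
    ⟨j, hj⟩ | ⟨p, hp, hpdvd, hodd⟩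
  · rcases le_or_gt j 1 with hj₁ | hj₁
    · exact Or.inl (hj ▸ pow_dvd_pow 2 hj₁)
    · have h4 : 4 ∣ Int.gcd k (2 * N) := hj ▸ pow_dvd_pow 2 hj₁
      exact Or.inr (Or.inl ((Int.natCast_dvd_natCast.2 h4).trans (Int.gcd_dvd_left ..)))
  · have hpdvd := Int.natCast_dvd_natCast.2 hpdvd
    have hp' := Nat.prime_iff_prime_int.1 hp
    have hodd' : Odd (p : ℤ) := hodd.natCast
    refine Or.inr (Or.inr ⟨p, hp', hodd', hpdvd.trans (Int.gcd_dvd_left ..), ?_⟩)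
    refine (hp'.dvd_or_dvd (hpdvd.trans (Int.gcd_dvd_right ..))).resolve_left fun h2 => ?_
    exact Int.not_even_iff_odd.2 hodd' (even_iff_two_dvd.2 ((Nat.prime_dvd_prime_iff_eq hp
      Nat.prime_two).1 (by exact_mod_cast h2) ▸ dvd_rfl))

theorem odd_of_isCoprime_of_even {x N : ℤ} (h : IsCoprime x N) (hN : Even N) : Odd x :=
  Int.isCoprime_two_right.1 (h.of_isCoprime_of_dvd_right hN.two_dvd)

/-- The arithmetic data of a two-dimensional theta sum at the root of unity `e^{2πih/k}`. In the
coordinates `X = N₁ (n₁ + α₁)`, `Y = N₂ (n₂ + α₂)` its exponent is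
`μ₁ X² / N₁ + X Y + μ₃ Y² / N₂`. -/
structure ThetaData where
  (h : ℤ) (k : ℕ) (N₁ N₂ μ₁ μ₃ : ℤ)
  [k_neZero : NeZero k]
  N₁_ne_zero : N₁ ≠ 0
  N₂_ne_zero : N₂ ≠ 0

namespace ThetaData

attribute [instance] k_neZero

/-- The data with the two coordinates exchanged. -/
def swap (D : ThetaData) : ThetaData where
  h := D.h
  k := D.k
  N₁ := D.N₂
  N₂ := D.N₁
  μ₁ := D.μ₃
  μ₃ := D.μ₁
  N₁_ne_zero := D.N₂_ne_zero
  N₂_ne_zero := D.N₁_ne_zero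

variable (D : ThetaData)

/-- The root of unity `e(h/k · (μ₁ X² / N₁ + X Y + μ₃ Y² / N₂))`. -/
noncomputable def phase (X Y : ℤ) : ℂ :=
  eQ (D.h / D.k * binaryForm (D.μ₁ / D.N₁ : ℚ) 1 (D.μ₃ / D.N₂) X Y)

/-- The sum of the phases of the lattice points congruent to `(x, y)` modulo `(N₁, N₂)`, over a full
period. -/
noncomputable def gaussSum (x y : ℤ) : ℂ :=
  ∑ l : Fin D.k × Fin D.k, D.phase (D.N₁ * (l.1 : ℕ) + x) (D.N₂ * (l.2 : ℕ) + y)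

/-- The first moment, in the first coordinate, of the phases summed by `gaussSum`. -/
noncomputable def gaussMoment (x y : ℤ) : ℂ :=
  ∑ l : Fin D.k × Fin D.k,
    D.phase (D.N₁ * (l.1 : ℕ) + x) (D.N₂ * (l.2 : ℕ) + y) * ((l.1 : ℕ) + x / D.N₁)

theorem norm_phase (X Y : ℤ) : ‖D.phase X Y‖ = 1 := norm_eQ _

theorem phase_swap (X Y : ℤ) : D.swap.phase Y X = D.phase X Y := by
  unfold phase binaryForm swap
  congr 1
  ring

theorem phase_neg_neg (X Y : ℤ) : D.phase (-X) (-Y) = D.phase X Y := by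
  unfold phase binaryForm
  congr 1
  push_cast
  ring

theorem phase_congr_left {X X' : ℤ} (Y : ℤ) (h₁ : (D.k : ℤ) ∣ X' - X)
    (h₂ : D.N₁ * D.k ∣ X' ^ 2 - X ^ 2) : D.phase X' Y = D.phase X Y := by
  obtain ⟨u, hu⟩ := h₁
  obtain ⟨v, hv⟩ := h₂
  have hX : (X' : ℚ) = X + D.k * u := by rw [← sub_eq_iff_eq_add']; exact_mod_cast hu
  have hX₂ : (X' : ℚ) ^ 2 = X ^ 2 + D.N₁ * D.k * v := by
    rw [← sub_eq_iff_eq_add']; exact_mod_cast hv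
  have hN : (D.N₁ : ℚ) ≠ 0 := by exact_mod_cast D.N₁_ne_zero
  have hk : (D.k : ℚ) ≠ 0 := NeZero.ne _
  unfold phase binaryForm
  refine (congrArg eQ ?_).trans (eQ_add_intCast _ (D.h * (D.μ₁ * v + u * Y)))
  rw [hX₂, hX]
  push_cast
  field_simp
  ring

theorem phase_add_mul_left (X Y m : ℤ) : D.phase (X + D.N₁ * (D.k * m)) Y = D.phase X Y :=
  D.phase_congr_left Y ⟨D.N₁ * m, by ring⟩ ⟨m * (2 * X + D.N₁ * D.k * m), by ring⟩

theorem phase_add_mul_right (X Y m : ℤ) : D.phase X (Y + D.N₂ * (D.k * m)) = D.phase X Y := by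
  rw [← D.phase_swap, ← D.phase_swap X Y]
  exact D.swap.phase_add_mul_left Y X m

theorem sum_phase_mul_add (x Y c : ℤ) :
    ∑ l : Fin D.k, D.phase (D.N₁ * ((l : ℕ) + c) + x) Y =
      ∑ l : Fin D.k, D.phase (D.N₁ * (l : ℕ) + x) Y := by
  refine sum_fin_add_of_periodic (ψ := fun l => D.phase (D.N₁ * l + x) Y) (fun l => ?_) c
  refine Eq.trans ?_ (D.phase_add_mul_left (D.N₁ * l + x) Y 1)
  exact congrArg (D.phase · Y) (by ring)

theorem gaussSum_swap (x y : ℤ) : D.swap.gaussSum y x = D.gaussSum x y := by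
  rw [gaussSum, gaussSum, ← (Equiv.prodComm _ _).sum_comp]
  exact Finset.sum_congr rfl fun l _ => D.phase_swap _ _

end ThetaData

/-- Conditions at `2` and at the odd primes dividing `N₁ N₂`: at each of these primes, one of the
two coordinates admits the shift of `ThetaData.gaussSum_eq_zero_of_dvd`. -/
structure IsNondegenerate (N₁ N₂ μ₁ μ₃ : ℤ) : Prop where
  even₁ : Even N₁
  even₂ : Even N₂
  odd_prime : ∀ p : ℤ, Prime p → Odd p → p ∣ N₁ * N₂ → ¬(p ∣ N₁ ↔ p ∣ μ₁) ∨ ¬(p ∣ N₂ ↔ p ∣ μ₃)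
  two : ¬(4 ∣ N₁ ↔ 2 ∣ μ₁) ∨ ¬(4 ∣ N₂ ↔ 2 ∣ μ₃)

theorem IsNondegenerate.swap {N₁ N₂ μ₁ μ₃ : ℤ} (hnd : IsNondegenerate N₁ N₂ μ₁ μ₃) :
    IsNondegenerate N₂ N₁ μ₃ μ₁ where
  even₁ := hnd.even₂
  even₂ := hnd.even₁
  odd_prime p hp hodd hdvd := (hnd.odd_prime p hp hodd (mul_comm N₁ N₂ ▸ hdvd)).symm
  two := hnd.two.symm

namespace ThetaData

variable (D : ThetaData) {x y : ℤ}

theorem phase_add_mul_N₁ (X Y m : ℤ) :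
    D.phase (X + D.N₁ * m) Y =
      eQ (D.h / D.k * (m * (D.μ₁ * (2 * X + D.N₁ * m) + D.N₁ * Y))) * D.phase X Y := by
  have hN : (D.N₁ : ℚ) ≠ 0 := by exact_mod_cast D.N₁_ne_zero
  unfold phase binaryForm
  rw [← eQ_add, ← mul_add]
  congr 2
  push_cast
  field_simp
  ring

theorem phase_mul_add_add_of_dvd {d m u v : ℤ} (hm : (D.k : ℤ) = d * m) (hu : D.N₁ * D.μ₁ = d * u)
    (hv : D.N₁ * D.N₂ = d * v) (x y l₁ l₂ : ℤ) :
    D.phase (D.N₁ * (l₁ + m) + x) (D.N₂ * l₂ + y) =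
      eQ (D.h * (2 * D.μ₁ * x + D.N₁ * y) / d) * D.phase (D.N₁ * l₁ + x) (D.N₂ * l₂ + y) := by
  have hm' : (D.k : ℚ) = d * m := by exact_mod_cast hm
  have hu' : (D.N₁ : ℚ) * D.μ₁ = d * u := by exact_mod_cast hu
  have hv' : (D.N₁ : ℚ) * D.N₂ = d * v := by exact_mod_cast hv
  obtain ⟨hd₀, hm₀⟩ := mul_ne_zero_iff.1 (hm' ▸ NeZero.ne (D.k : ℚ))
  rw [mul_add, add_right_comm, phase_add_mul_N₁]
  congr 1
  refine (congrArg eQ ?_).trans (eQ_add_intCast _ (D.h * (2 * u * l₁ + u * m + v * l₂)))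
  rw [hm']
  push_cast
  field_simp
  linear_combination D.h * ((2 * l₁ + m) * hu' + l₂ * hv')

-- The shift of `l₁` by `k / d` multiplies every phase by `e(h (2 μ₁ x + N₁ y) / d) ≠ 1`.
theorem gaussSum_eq_zero_of_dvd {d : ℤ} (hdk : d ∣ D.k) (hd₁ : d ∣ D.N₁ * D.μ₁)
    (hd₂ : d ∣ D.N₁ * D.N₂) (hxy : ¬d ∣ D.h * (2 * D.μ₁ * x + D.N₁ * y)) :
    D.gaussSum x y = 0 := by
  obtain ⟨m, hm⟩ := hdk
  obtain ⟨u, hu⟩ := hd₁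
  obtain ⟨v, hv⟩ := hd₂
  have hd : (d : ℚ) ≠ 0 := by
    have hdm : d * m ≠ 0 := hm ▸ NeZero.ne (D.k : ℤ)
    exact_mod_cast left_ne_zero_of_mul hdm
  have hsum : eQ (D.h * (2 * D.μ₁ * x + D.N₁ * y) / d) * D.gaussSum x y = D.gaussSum x y := by
    simp only [gaussSum, Fintype.sum_prod_type_right, Finset.mul_sum]
    refine Finset.sum_congr rfl fun l₂ _ => ?_
    rw [← D.sum_phase_mul_add x _ m]
    exact Finset.sum_congr rfl fun l₁ _ => (D.phase_mul_add_add_of_dvd hm hu hv x y l₁ l₂).symm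
  by_contra hne
  obtain ⟨n, hn⟩ := eQ_eq_one_iff.1 ((mul_eq_right₀ hne).1 hsum)
  rw [div_eq_iff hd, mul_comm (n : ℚ)] at hn
  exact hxy ⟨n, by exact_mod_cast hn⟩

theorem gaussSum_eq_zero_of_odd_prime {p : ℤ} (hp : Prime p) (hodd : Odd p) (hpk : p ∣ D.k)
    (hpN : p ∣ D.N₁ * D.N₂) (hh : IsCoprime D.h D.k) (hx : IsCoprime x D.N₁)
    (hy : IsCoprime y D.N₂) (hne : ¬(p ∣ D.N₁ ↔ p ∣ D.μ₁)) : D.gaussSum x y = 0 := by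
  have hp₂ : ¬p ∣ 2 := fun h2 => hp.not_isUnit
    ((Int.isCoprime_two_right.2 hodd).isUnit_of_dvd' dvd_rfl h2)
  have hph : ¬p ∣ D.h := fun h => hp.not_isUnit (hh.isUnit_of_dvd' h hpk)
  refine D.gaussSum_eq_zero_of_dvd hpk ?_ hpN (hp.dvd_mul.not.2 (not_or.2 ⟨hph, ?_⟩))
  · rw [hp.dvd_mul]
    tauto
  · by_cases hpN₁ : p ∣ D.N₁
    · have hpμ : ¬p ∣ D.μ₁ := fun h => hne (iff_of_true hpN₁ h)
      have hpx : ¬p ∣ x := fun h => hp.not_isUnit (hx.isUnit_of_dvd' h hpN₁)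
      rw [dvd_add_left (hpN₁.mul_right y), hp.dvd_mul, hp.dvd_mul]
      tauto
    · have hpμ : p ∣ D.μ₁ := by tauto
      have hpy : ¬p ∣ y := fun h =>
        hp.not_isUnit (hy.isUnit_of_dvd' h ((hp.dvd_or_dvd hpN).resolve_left hpN₁))
      rw [dvd_add_right ((hpμ.mul_left 2).mul_right x), hp.dvd_mul]
      tauto

theorem gaussSum_eq_zero_of_four_dvd (h4k : 4 ∣ (D.k : ℤ)) (hN₁ : Even D.N₁) (hN₂ : Even D.N₂)
    (hh : IsCoprime D.h D.k) (hx : IsCoprime x D.N₁) (hy : IsCoprime y D.N₂)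
    (hne : ¬(4 ∣ D.N₁ ↔ 2 ∣ D.μ₁)) : D.gaussSum x y = 0 := by
  obtain ⟨a, ha⟩ := hN₁.two_dvd
  have hxo := odd_of_isCoprime_of_even hx hN₁
  have hyo := odd_of_isCoprime_of_even hy hN₂
  have hho := odd_of_isCoprime_of_even hh (even_iff_two_dvd.2 (dvd_trans (by decide) h4k))
  rw [ha, show (4 : ℤ) = 2 * 2 by rfl, mul_dvd_mul_iff_left two_ne_zero, ← even_iff_two_dvd,
    ← even_iff_two_dvd] at hne
  refine D.gaussSum_eq_zero_of_dvd h4k ?_ ?_ ?_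
  · rw [ha, mul_assoc, show (4 : ℤ) = 2 * 2 by rfl, mul_dvd_mul_iff_left two_ne_zero,
      ← even_iff_two_dvd, Int.even_mul]
    tauto
  · exact mul_dvd_mul hN₁.two_dvd hN₂.two_dvd
  · rw [ha, show D.h * (2 * D.μ₁ * x + 2 * a * y) = 2 * (D.h * (D.μ₁ * x + a * y)) by ring,
      show (4 : ℤ) = 2 * 2 by rfl, mul_dvd_mul_iff_left two_ne_zero, ← even_iff_two_dvd]
    simp only [← Int.not_even_iff_odd] at hxo hyo hho
    simp only [Int.even_mul, Int.even_add]
    tauto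

theorem gaussSum_eq_zero_of_isNondegenerate (hnd : IsNondegenerate D.N₁ D.N₂ D.μ₁ D.μ₃)
    (hh : IsCoprime D.h D.k) (hx : IsCoprime x D.N₁) (hy : IsCoprime y D.N₂)
    (hk : 4 ∣ (D.k : ℤ) ∨ ∃ p : ℤ, Prime p ∧ Odd p ∧ p ∣ D.k ∧ p ∣ D.N₁) :
    D.gaussSum x y = 0 := by
  rcases hk with h4k | ⟨p, hp, hodd, hpk, hpN₁⟩
  · rcases hnd.two with h | h
    · exact D.gaussSum_eq_zero_of_four_dvd h4k hnd.even₁ hnd.even₂ hh hx hy h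
    · rw [← gaussSum_swap]
      exact D.swap.gaussSum_eq_zero_of_four_dvd h4k hnd.even₂ hnd.even₁ hh hy hx h
  · rcases hnd.odd_prime p hp hodd (hpN₁.mul_right _) with h | h
    · exact D.gaussSum_eq_zero_of_odd_prime hp hodd hpk (hpN₁.mul_right _) hh hx hy h
    · rw [← gaussSum_swap]
      exact D.swap.gaussSum_eq_zero_of_odd_prime hp hodd hpk (hpN₁.mul_left _) hh hy hx h

-- Shifting `l₁` by a solution `c` of `N₁ c ≡ x - x' (mod k)` matches the two sums term by term.
theorem gaussSum_congr_of_gcd_dvd_two {x x' : ℤ} (y : ℤ)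
    (hgcd : Int.gcd D.k (2 * D.N₁) ∣ 2) (hpar : 2 ∣ x' - x)
    (hsq : 2 * D.N₁ ∣ x' ^ 2 - x ^ 2) : D.gaussSum x' y = D.gaussSum x y := by
  obtain ⟨u, v, huv⟩ := Int.gcd_dvd_iff.1 hgcd
  obtain ⟨z, hz⟩ := hpar
  obtain ⟨w, hw⟩ := hsq
  rw [Nat.cast_two] at huv
  set c : ℤ := -(2 * v * z) with hc
  simp only [gaussSum, Fintype.sum_prod_type_right]
  refine Finset.sum_congr rfl fun l₂ _ => ?_
  rw [← D.sum_phase_mul_add x' _ c]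
  refine Finset.sum_congr rfl fun l _ => ?_
  set X : ℤ := D.N₁ * (l : ℕ) + x with hX
  set X' : ℤ := D.N₁ * ((l : ℕ) + c) + x' with hX'
  have hdiff : X' - X = D.k * (z * u) := by
    linear_combination hX' - hX + D.N₁ * hc + hz + z * huv
  obtain ⟨T, hT⟩ : 2 * D.N₁ ∣ X' ^ 2 - X ^ 2 := by
    refine ⟨w + ((l : ℕ) + c) * x' - (l : ℕ) * x + D.N₁ * ((l : ℕ) * c + 2 * v ^ 2 * z ^ 2), ?_⟩
    rw [hX, hX', hc]
    linear_combination hw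
  refine D.phase_congr_left _ ⟨_, hdiff⟩ ⟨u * T + v * z * u * (X' + X), ?_⟩
  refine mul_left_cancel₀ (two_ne_zero (α := ℤ)) ?_
  linear_combination (X' ^ 2 - X ^ 2) * huv + D.k * u * hT + 2 * D.N₁ * v * (X' + X) * hdiff

theorem gaussSum_congr {x x' y : ℤ} (hnd : IsNondegenerate D.N₁ D.N₂ D.μ₁ D.μ₃)
    (hh : IsCoprime D.h D.k) (hx : IsCoprime x D.N₁) (hx' : IsCoprime x' D.N₁)
    (hy : IsCoprime y D.N₂) (hsq : 2 * D.N₁ ∣ x' ^ 2 - x ^ 2) :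
    D.gaussSum x' y = D.gaussSum x y := by
  rcases gcd_two_mul_dvd_two_or D.k D.N₁ with hgcd | hk
  · have hpar := (odd_of_isCoprime_of_even hx' hnd.even₁).sub_odd
      (odd_of_isCoprime_of_even hx hnd.even₁)
    exact D.gaussSum_congr_of_gcd_dvd_two y hgcd hpar.two_dvd hsq
  · rw [D.gaussSum_eq_zero_of_isNondegenerate hnd hh hx hy hk,
      D.gaussSum_eq_zero_of_isNondegenerate hnd hh hx' hy hk]

-- The reflection `l ↦ k - 1 - l` maps `(x, y)` to `(N₁ - x, N₂ - y)`.
theorem gaussMoment_sub_sub (x y : ℤ) :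
    D.gaussMoment (D.N₁ - x) (D.N₂ - y) = D.k * D.gaussSum x y - D.gaussMoment x y := by
  have hN : (D.N₁ : ℂ) ≠ 0 := by exact_mod_cast D.N₁_ne_zero
  rw [gaussMoment, gaussMoment, gaussSum,
    ← (Equiv.prodCongr Fin.revPerm Fin.revPerm).sum_comp, Finset.mul_sum, ← Finset.sum_sub_distrib]
  refine Finset.sum_congr rfl fun l _ => ?_
  have hrev (i : Fin D.k) : ((Fin.rev i : ℕ) : ℤ) = D.k - 1 - (i : ℕ) := by
    rw [Fin.val_rev]; omega
  have hphase : D.phase (D.N₁ * (Fin.rev l.1 : ℕ) + (D.N₁ - x))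
      (D.N₂ * (Fin.rev l.2 : ℕ) + (D.N₂ - y)) =
        D.phase (D.N₁ * (l.1 : ℕ) + x) (D.N₂ * (l.2 : ℕ) + y) := by
    rw [← D.phase_neg_neg, ← D.phase_add_mul_left _ _ 1, ← D.phase_add_mul_right _ _ 1, hrev, hrev]
    congr 1 <;> ring
  simp only [Equiv.prodCongr_apply, Prod.map, Fin.revPerm_apply, hphase]
  rw [mul_comm (D.k : ℂ), ← mul_sub]
  congr 1
  have := congrArg (Int.cast : ℤ → ℂ) (hrev l.1)
  push_cast at this ⊢
  rw [this]
  field_simp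
  ring

theorem gaussMoment_swap (x y : ℤ) :
    D.swap.gaussMoment y x = ∑ l : Fin D.k × Fin D.k,
      D.phase (D.N₁ * (l.1 : ℕ) + x) (D.N₂ * (l.2 : ℕ) + y) * ((l.2 : ℕ) + y / D.N₂) := by
  rw [gaussMoment, ← (Equiv.prodComm _ _).sum_comp]
  exact Finset.sum_congr rfl fun l _ => congrArg (· * _) (D.phase_swap _ _)

variable {ι : Type*} [Fintype ι]

theorem sum_mul_gaussSum_eq_zero {w : ι → ℂ} {x y : ι → ℤ}
    (hnd : IsNondegenerate D.N₁ D.N₂ D.μ₁ D.μ₃) (hh : IsCoprime D.h D.k)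
    (hx : ∀ i, IsCoprime (x i) D.N₁) (hy : ∀ i, IsCoprime (y i) D.N₂)
    (hxsq : ∀ i j, 2 * D.N₁ ∣ x i ^ 2 - x j ^ 2) (hysq : ∀ i j, 2 * D.N₂ ∣ y i ^ 2 - y j ^ 2)
    (hw : ∑ i, w i = 0) : ∑ i, w i * D.gaussSum (x i) (y i) = 0 := by
  have hconst (i j : ι) : D.gaussSum (x i) (y i) = D.gaussSum (x j) (y j) := by
    rw [D.gaussSum_congr hnd hh (hx j) (hx i) (hy i) (hxsq i j), ← gaussSum_swap,
      D.swap.gaussSum_congr hnd.swap hh (hy j) (hy i) (hx j) (hysq i j), gaussSum_swap]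
  rcases isEmpty_or_nonempty ι with _ | ⟨⟨j⟩⟩
  · exact Fintype.sum_empty _
  · simp only [hconst _ j, ← Finset.sum_mul, hw, zero_mul]

theorem sum_mul_gaussMoment_eq_zero {w : ι → ℂ} {x y : ι → ℤ} (ρ : Equiv.Perm ι)
    (hw : ∀ i, w (ρ i) = w i) (hx : ∀ i, x (ρ i) = D.N₁ - x i) (hy : ∀ i, y (ρ i) = D.N₂ - y i)
    (h₀ : ∑ i, w i * D.gaussSum (x i) (y i) = 0) :
    ∑ i, w i * D.gaussMoment (x i) (y i) = 0 := by
  refine self_eq_neg.1 ?_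
  calc ∑ i, w i * D.gaussMoment (x i) (y i)
      = ∑ i, (D.k * (w i * D.gaussSum (x i) (y i)) - w i * D.gaussMoment (x i) (y i)) := by
        rw [← Equiv.sum_comp ρ]
        refine Finset.sum_congr rfl fun i _ => ?_
        rw [hw, hx, hy, gaussMoment_sub_sub]
        ring
    _ = -∑ i, w i * D.gaussMoment (x i) (y i) := by
        rw [Finset.sum_sub_distrib, ← Finset.mul_sum, h₀, mul_zero, zero_sub]

/-- The term at `n` of the theta series attached to `α = (x / N₁, y / N₂)`: its phase times the
damping factor at parameter `t`. -/
noncomputable def thetaTerm (t : ℝ) (x y : ℤ) (n : ℕ × ℕ) : ℂ :=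
  D.phase (D.N₁ * (n.1 : ℕ) + x) (D.N₂ * (n.2 : ℕ) + y) *
    (Real.exp (-t * binaryForm (D.N₁ * D.μ₁ : ℝ) (D.N₁ * D.N₂) (D.N₂ * D.μ₃)
      (n.1 + x / D.N₁) (n.2 + y / D.N₂)) : ℂ)

theorem phase_mod_mod (x y : ℤ) (n : ℕ × ℕ) :
    D.phase (D.N₁ * (n.1 % D.k : ℕ) + x) (D.N₂ * (n.2 % D.k : ℕ) + y) =
      D.phase (D.N₁ * (n.1 : ℕ) + x) (D.N₂ * (n.2 : ℕ) + y) := by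
  have hdiv (m : ℕ) : (m : ℤ) = (m % D.k : ℕ) + D.k * (m / D.k : ℕ) := by
    exact_mod_cast (Nat.mod_add_div m D.k).symm
  rw [← D.phase_add_mul_left _ _ (n.1 / D.k : ℕ), ← D.phase_add_mul_right _ _ (n.2 / D.k : ℕ)]
  congr 1
  · linear_combination -D.N₁ * hdiv n.1
  · linear_combination -D.N₂ * hdiv n.2

theorem summable_norm_thetaTerm
    (hP : IsPosDefBinary (D.N₁ * D.μ₁) (D.N₁ * D.N₂) (D.N₂ * D.μ₃)) {t : ℝ} (ht : 0 < t)
    (x y : ℤ) : Summable fun n => ‖D.thetaTerm t x y n‖ :=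
  hP.summable_mul_exp_neg _ _ (fun _ => (D.norm_phase _ _).le) ht

theorem exists_tendsto_sum_thetaTerm
    (hP : IsPosDefBinary (D.N₁ * D.μ₁) (D.N₁ * D.N₂) (D.N₂ * D.μ₃))
    (hnd : IsNondegenerate D.N₁ D.N₂ D.μ₁ D.μ₃) (hh : IsCoprime D.h D.k)
    {w : ι → ℂ} {x y : ι → ℤ} (ρ : Equiv.Perm ι)
    (hwρ : ∀ i, w (ρ i) = w i) (hxρ : ∀ i, x (ρ i) = D.N₁ - x i) (hyρ : ∀ i, y (ρ i) = D.N₂ - y i)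
    (hx : ∀ i, IsCoprime (x i) D.N₁) (hy : ∀ i, IsCoprime (y i) D.N₂)
    (hxsq : ∀ i j, 2 * D.N₁ ∣ x i ^ 2 - x j ^ 2) (hysq : ∀ i j, 2 * D.N₂ ∣ y i ^ 2 - y j ^ 2)
    (hw : ∑ i, w i = 0) :
    ∃ c, Tendsto (fun t => ∑ i, w i * ∑' n, D.thetaTerm t (x i) (y i) n) (𝓝[>] 0) (𝓝 c) := by
  have h₀ := D.sum_mul_gaussSum_eq_zero hnd hh hx hy hxsq hysq hw
  have h₁ := D.sum_mul_gaussMoment_eq_zero ρ hwρ hxρ hyρ h₀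
  have h₂ := D.swap.sum_mul_gaussMoment_eq_zero ρ hwρ hyρ hxρ
    (by simpa only [gaussSum_swap] using h₀)
  obtain ⟨c, hc⟩ := hP.exists_tendsto_sum_tsum_of_periodic (k := D.k)
    (φ := fun i n => w i * D.phase (D.N₁ * (n.1 : ℕ) + x i) (D.N₂ * (n.2 : ℕ) + y i))
    (α := fun i => x i / D.N₁) (β := fun i => y i / D.N₂)
    (fun i n => congrArg (w i * ·) (D.phase_mod_mod (x i) (y i) n))
    (by simpa only [gaussSum, Finset.mul_sum] using h₀)
    (by simpa [gaussMoment, Finset.mul_sum, mul_assoc] using h₁)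
    (by simpa [gaussMoment_swap, Finset.mul_sum, mul_assoc] using h₂)
  refine ⟨c, hc.congr fun t => Finset.sum_congr rfl fun i _ => ?_⟩
  rw [← tsum_mul_left]
  exact tsum_congr fun n => mul_assoc _ _ _

end ThetaData

section Reflection

/-- The two integers `x` and `N - x`, the numerators of the points `pt x N`. -/
def reflect (N x : ℤ) : Fin 2 → ℤ := ![x, N - x]

theorem pt_eq_reflect_div {N : ℕ} (hN : N ≠ 0) (x : ℕ) (i : Fin 2) :
    pt x N i = reflect N x i / N := by
  have hN' : (N : ℚ) ≠ 0 := by exact_mod_cast hN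
  fin_cases i
  · simp [pt, reflect]
  · simp [pt, reflect, sub_div, div_self hN']

theorem reflect_rev (N x : ℤ) (i : Fin 2) : reflect N x i.rev = N - reflect N x i := by
  fin_cases i <;> simp [reflect]

theorem isCoprime_reflect {N x : ℤ} (h : IsCoprime x N) (i : Fin 2) :
    IsCoprime (reflect N x i) N := by
  fin_cases i
  · exact h
  · simpa [reflect, ← sub_eq_add_neg, mul_one] using h.neg_left.mul_add_left_left 1

theorem two_mul_dvd_reflect_sq_sub_sq {N : ℤ} (hN : Even N) (x : ℤ) (i : Fin 2) :
    2 * N ∣ reflect N x i ^ 2 - x ^ 2 := by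
  fin_cases i
  · simp [reflect]
  · obtain ⟨a, rfl⟩ := hN
    exact ⟨a - x, by simp [reflect]; ring⟩

theorem isCoprime_of_two_mul_dvd_sq_sub_sq {N r s : ℤ} (hr : IsCoprime r N)
    (h : 2 * N ∣ r ^ 2 - s ^ 2) : IsCoprime s N := by
  obtain ⟨c, hc⟩ := h
  rw [← IsCoprime.pow_left_iff two_pos, show s ^ 2 = r ^ 2 + N * (-2 * c) by linear_combination -hc]
  exact hr.pow_left.add_mul_left_left _

theorem two_mul_dvd_reflect_sq_sub_reflect_sq {N : ℤ} (hN : Even N) {x : Fin 2 → ℤ}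
    (h : 2 * N ∣ x 0 ^ 2 - x 1 ^ 2) (a b i j : Fin 2) :
    2 * N ∣ reflect N (x a) i ^ 2 - reflect N (x b) j ^ 2 := by
  have hx : 2 * N ∣ x a ^ 2 - x b ^ 2 := by
    fin_cases a <;> fin_cases b <;> simp [h, dvd_sub_comm.1 h]
  rw [show reflect N (x a) i ^ 2 - reflect N (x b) j ^ 2 = (reflect N (x a) i ^ 2 - x a ^ 2) +
    (x a ^ 2 - x b ^ 2) - (reflect N (x b) j ^ 2 - x b ^ 2) by ring]
  exact ((two_mul_dvd_reflect_sq_sub_sq hN _ i).add hx).sub (two_mul_dvd_reflect_sq_sub_sq hN _ j)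

end Reflection

namespace ThetaData

variable (D : ThetaData)

theorem exists_tendsto_thetaTerm_reflect
    (hP : IsPosDefBinary (D.N₁ * D.μ₁) (D.N₁ * D.N₂) (D.N₂ * D.μ₃))
    (hnd : IsNondegenerate D.N₁ D.N₂ D.μ₁ D.μ₃) (hh : IsCoprime D.h D.k)
    {r₁ s₁ r₂ s₂ : ℤ} (hr₁ : IsCoprime r₁ D.N₁) (hr₂ : IsCoprime r₂ D.N₂)
    (hrs₁ : 2 * D.N₁ ∣ r₁ ^ 2 - s₁ ^ 2) (hrs₂ : 2 * D.N₂ ∣ r₂ ^ 2 - s₂ ^ 2) :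
    ∃ c, Tendsto (fun t =>
      (∑ i : Fin 2, ∑ j : Fin 2,
        ((∑' n, D.thetaTerm t (reflect D.N₁ r₁ i) (reflect D.N₂ r₂ j) n) +
          ∑' n, D.thetaTerm t (reflect D.N₁ s₁ i) (reflect D.N₂ s₂ j) n)) -
      (∑ i : Fin 2, ∑ j : Fin 2,
        ((∑' n, D.thetaTerm t (reflect D.N₁ r₁ i) (reflect D.N₂ s₂ j) n) +
          ∑' n, D.thetaTerm t (reflect D.N₁ s₁ i) (reflect D.N₂ r₂ j) n)))
      (𝓝[>] 0) (𝓝 c) := by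
  have hx : ∀ a : Fin 2, IsCoprime (![r₁, s₁] a) D.N₁ :=
    Fin.forall_fin_two.2 ⟨hr₁, isCoprime_of_two_mul_dvd_sq_sub_sq hr₁ hrs₁⟩
  have hy : ∀ b : Fin 2, IsCoprime (![r₂, s₂] b) D.N₂ :=
    Fin.forall_fin_two.2 ⟨hr₂, isCoprime_of_two_mul_dvd_sq_sub_sq hr₂ hrs₂⟩
  obtain ⟨c, hc⟩ := D.exists_tendsto_sum_thetaTerm hP hnd hh
    (ι := (Fin 2 × Fin 2) × Fin 2 × Fin 2) (w := fun p => (-1) ^ (p.1.1 + p.1.2 : ℕ))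
    (x := fun p => reflect D.N₁ (![r₁, s₁] p.1.1) p.2.1)
    (y := fun p => reflect D.N₂ (![r₂, s₂] p.1.2) p.2.2)
    ((Equiv.refl _).prodCongr (Fin.revPerm.prodCongr Fin.revPerm))
    (fun _ => rfl) (fun _ => reflect_rev _ _ _) (fun _ => reflect_rev _ _ _)
    (fun p => isCoprime_reflect (hx p.1.1) _) (fun p => isCoprime_reflect (hy p.1.2) _)
    (fun _ _ => two_mul_dvd_reflect_sq_sub_reflect_sq hnd.even₁ (x := ![r₁, s₁]) hrs₁ _ _ _ _)
    (fun _ _ => two_mul_dvd_reflect_sq_sub_reflect_sq hnd.even₂ (x := ![r₂, s₂]) hrs₂ _ _ _ _)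
    (by simp [Fintype.sum_prod_type])
  refine ⟨c, hc.congr fun t => ?_⟩
  simp only [Fintype.sum_prod_type, Fin.sum_univ_two, Fin.isValue, Fin.val_zero, Fin.val_one,
    Matrix.cons_val_zero, Matrix.cons_val_one]
  ring

theorem phase_eq_eQ_binaryForm (x y n m : ℤ) :
    D.phase (D.N₁ * n + x) (D.N₂ * m + y) =
      eQ (D.h / D.k * binaryForm (D.N₁ * D.μ₁ : ℚ) (D.N₁ * D.N₂) (D.N₂ * D.μ₃)
        (n + x / D.N₁) (m + y / D.N₂)) := by
  have hN₁ : (D.N₁ : ℚ) ≠ 0 := by exact_mod_cast D.N₁_ne_zero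
  have hN₂ : (D.N₂ : ℚ) ≠ 0 := by exact_mod_cast D.N₂_ne_zero
  unfold phase binaryForm
  congr 2
  push_cast
  field_simp

end ThetaData

theorem isNondegenerate_of_coprime {N₁ N₂ L R₁ R₂ μ₁ μ₃ : ℕ} (hL : Even L)
    (hR₁ : N₁ = L * R₁) (hR₂ : N₂ = L * R₂) (hcop₁ : Nat.Coprime R₁ μ₁) (hcop₃ : Nat.Coprime R₂ μ₃)
    (hLμ : Nat.Coprime L (Nat.gcd μ₁ μ₃))
    (h4L : ¬4 ∣ L → Even R₁ ∨ Even R₂ ∨ ¬Even R₂ ∧ Even μ₃) :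
    IsNondegenerate N₁ N₂ μ₁ μ₃ := by
  have hLμ' {q : ℕ} (hq : q.Prime) (hqL : q ∣ L) : ¬q ∣ μ₁ ∨ ¬q ∣ μ₃ := by
    rw [← not_and_or, ← Nat.dvd_gcd_iff]
    exact fun h => Nat.not_coprime_of_dvd_of_dvd hq.one_lt hqL h hLμ
  have hRμ₁ {q : ℕ} (hq : q.Prime) (hqR : q ∣ R₁) : ¬q ∣ μ₁ :=
    fun h => Nat.not_coprime_of_dvd_of_dvd hq.one_lt hqR h hcop₁
  have hRμ₃ {q : ℕ} (hq : q.Prime) (hqR : q ∣ R₂) : ¬q ∣ μ₃ :=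
    fun h => Nat.not_coprime_of_dvd_of_dvd hq.one_lt hqR h hcop₃
  subst hR₁ hR₂
  refine ⟨(hL.mul_right _).natCast, (hL.mul_right _).natCast, fun p hp _ hdvd => ?_, ?_⟩
  · have hq := Int.prime_iff_natAbs_prime.1 hp
    rw [← Nat.cast_mul] at hdvd
    simp only [Int.dvd_natCast, hq.dvd_mul] at hdvd ⊢
    rcases (or_or_or_comm.1 hdvd).imp_left or_self_iff.1 with hqL | hqR₁ | hqR₂
    · exact (hLμ' hq hqL).imp (fun hμ h => hμ (h.1 (.inl hqL))) fun hμ h => hμ (h.1 (.inl hqL))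
    · exact .inl fun h => hRμ₁ hq hqR₁ (h.1 (.inr hqR₁))
    · exact .inr fun h => hRμ₃ hq hqR₂ (h.1 (.inr hqR₂))
  · norm_cast
    by_cases h4 : 4 ∣ L
    · exact (hLμ' Nat.prime_two hL.two_dvd).imp (fun hμ h => hμ (h.1 (h4.mul_right _)))
        fun hμ h => hμ (h.1 (h4.mul_right _))
    · rcases h4L h4 with h₁ | h₂ | ⟨h₂, hμ⟩
      · exact .inl fun h => hRμ₁ Nat.prime_two h₁.two_dvd (h.1 (mul_dvd_mul hL.two_dvd h₁.two_dvd))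
      · exact .inr fun h => hRμ₃ Nat.prime_two h₂.two_dvd (h.1 (mul_dvd_mul hL.two_dvd h₂.two_dvd))
      · have h4R₂ : Nat.Coprime (2 ^ 2) R₂ :=
          (Nat.coprime_two_left.2 (Nat.not_even_iff_odd.1 h₂)).pow_left 2
        exact .inr fun h => h4 (h4R₂.dvd_of_dvd_mul_right (h.2 hμ.two_dvd))

theorem IsPosDefBinary.of_factorization {N₁ N₂ L R₁ R₂ μ₁ μ₃ : ℕ} {σ₂ : ℚ} (hL : 0 < L)
    (hR₁ : N₁ = L * R₁) (hR₂ : N₂ = L * R₂) (hσ₂ : 2 * σ₂ = L * R₁ * R₂)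
    (hσ₁ : 0 < (R₁ * μ₁ : ℚ)) (hdisc : 0 < (R₁ * μ₁ : ℚ) * (R₂ * μ₃) - σ₂ ^ 2) :
    IsPosDefBinary (N₁ * μ₁) (N₁ * N₂) (N₂ * μ₃) := by
  have hσ : IsPosDefBinary (R₁ * μ₁) (2 * σ₂) (R₂ * μ₃) :=
    .of_mul_sub_sq_pos (by exact_mod_cast hσ₁) (by exact_mod_cast hdisc)
  have h2σ₂ : (2 * σ₂ : ℝ) = L * R₁ * R₂ := by exact_mod_cast hσ₂
  simpa [h2σ₂, hR₁, hR₂, mul_assoc, mul_left_comm (R₁ : ℝ)] using hσ.mul_left (Nat.cast_pos.2 hL)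

theorem radial_limit_exists_general (N₁ N₂ L μ₁ μ₃ : ℕ) (hN₁ : 0 < N₁) (hN₂ : 0 < N₂)
    (hnd : IsNondegenerate N₁ N₂ μ₁ μ₃)
    (hP : IsPosDefBinary (N₁ * μ₁) (N₁ * N₂) (N₂ * μ₃))
    (r₁ s₁ r₂ s₂ : ℕ) (hr₁ : Nat.gcd r₁ N₁ = 1) (hr₂ : Nat.gcd r₂ N₂ = 1)
    (hrs₁ : (r₁ : ℤ) ^ 2 ≡ (s₁ : ℤ) ^ 2 [ZMOD (2 * N₁)])
    (hrs₂ : (r₂ : ℤ) ^ 2 ≡ (s₂ : ℤ) ^ 2 [ZMOD (2 * N₂)])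
    (Q : ℚ → ℚ → ℚ)
    (hQ : ∀ x y : ℚ, L * Q x y = binaryForm (N₁ * μ₁ : ℚ) (N₁ * N₂) (N₂ * μ₃) x y)
    (h : ℤ) (k : ℕ) (hk : 0 < k) (hhk : Int.gcd h (k : ℤ) = 1)
    (W : ℝ → ℚ → ℚ → ℕ × ℕ → ℂ)
    (hW : ∀ (t : ℝ) (α₁ α₂ : ℚ) (n : ℕ × ℕ),
      W t α₁ α₂ n = eQ ((h : ℚ) / (k : ℚ) * L * Q ((n.1 : ℚ) + α₁) ((n.2 : ℚ) + α₂)) *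
        Real.exp (-t * ((L : ℝ) * (Q ((n.1 : ℚ) + α₁) ((n.2 : ℚ) + α₂) : ℝ)))) :
    (∀ t : ℝ, 0 < t → ∀ i j : Fin 2,
      Summable (fun n : ℕ × ℕ => ‖W t (pt r₁ N₁ i) (pt r₂ N₂ j) n‖) ∧
      Summable (fun n : ℕ × ℕ => ‖W t (pt s₁ N₁ i) (pt s₂ N₂ j) n‖) ∧
      Summable (fun n : ℕ × ℕ => ‖W t (pt r₁ N₁ i) (pt s₂ N₂ j) n‖) ∧
      Summable (fun n : ℕ × ℕ => ‖W t (pt s₁ N₁ i) (pt r₂ N₂ j) n‖)) ∧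
    ∃ c : ℂ, Tendsto (fun t : ℝ =>
        (∑ i : Fin 2, ∑ j : Fin 2,
          ((∑' n : ℕ × ℕ, W t (pt r₁ N₁ i) (pt r₂ N₂ j) n) +
            ∑' n : ℕ × ℕ, W t (pt s₁ N₁ i) (pt s₂ N₂ j) n)) -
        (∑ i : Fin 2, ∑ j : Fin 2,
          ((∑' n : ℕ × ℕ, W t (pt r₁ N₁ i) (pt s₂ N₂ j) n) +
            ∑' n : ℕ × ℕ, W t (pt s₁ N₁ i) (pt r₂ N₂ j) n)))
      (𝓝[>] (0 : ℝ)) (𝓝 c) := by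
  let D : ThetaData :=
    { h, k, N₁, N₂, μ₁, μ₃
      k_neZero := ⟨hk.ne'⟩
      N₁_ne_zero := by exact_mod_cast hN₁.ne'
      N₂_ne_zero := by exact_mod_cast hN₂.ne' }
  have hPD : IsPosDefBinary (D.N₁ * D.μ₁) (D.N₁ * D.N₂) (D.N₂ * D.μ₃) := by
    simpa only [D, Int.cast_natCast] using hP
  have hWθ (t : ℝ) (x y : ℕ) (i j : Fin 2) (n : ℕ × ℕ) : W t (pt x N₁ i) (pt y N₂ j) n =
      D.thetaTerm t (reflect D.N₁ x i) (reflect D.N₂ y j) n := by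
    have hQℝ (x y : ℚ) : (L * Q x y : ℝ) = binaryForm (N₁ * μ₁ : ℚ) (N₁ * N₂) (N₂ * μ₃) x y := by
      exact_mod_cast hQ x y
    rw [hW, mul_assoc (_ / _), hQ, hQℝ, ThetaData.thetaTerm, ThetaData.phase_eq_eQ_binaryForm,
      pt_eq_reflect_div hN₁.ne', pt_eq_reflect_div hN₂.ne']
    simp [D, binaryForm]
  simp only [hWθ]
  exact ⟨fun t ht i j =>
      ⟨D.summable_norm_thetaTerm hPD ht _ _, D.summable_norm_thetaTerm hPD ht _ _,
        D.summable_norm_thetaTerm hPD ht _ _, D.summable_norm_thetaTerm hPD ht _ _⟩,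
    D.exists_tendsto_thetaTerm_reflect hPD hnd (Int.isCoprime_iff_gcd_eq_one.2 hhk)
      (Nat.isCoprime_iff_coprime.2 hr₁) (Nat.isCoprime_iff_coprime.2 hr₂)
      hrs₁.symm.dvd hrs₂.symm.dvd⟩

theorem radial_limit_exists
    (N₁ N₂ L R₁ R₂ μ₁ μ₃ : ℕ) (σ₂ : ℚ)
    (hN₁ : 0 < N₁) (hN₂ : 0 < N₂) (hN₁e : Even N₁) (hN₂e : Even N₂)
    (hL : L = Nat.gcd N₁ N₂) (hR₁ : N₁ = L * R₁) (hR₂ : N₂ = L * R₂)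
    (hμ₁ : 0 < μ₁) (hμ₃ : 0 < μ₃)
    (hcop₁ : Nat.gcd R₁ μ₁ = 1) (hcop₃ : Nat.gcd R₂ μ₃ = 1)
    (hσ₂ : 2 * σ₂ = (L : ℚ) * R₁ * R₂)
    (hodd : ∀ p q : ℕ, p.Prime → q.Prime → Odd p → Odd q →
      p ∣ Nat.gcd μ₁ μ₃ → q ∣ Nat.gcd μ₁ μ₃ → p = q)
    (hLμ : Nat.gcd L (Nat.gcd μ₁ μ₃) = 1)
    (h4L : ¬ (4 ∣ L) →
      (Even R₁ ∧ ¬ Even R₂ ∧ ¬ Even μ₃) ∨ (¬ Even R₁ ∧ Even R₂ ∧ ¬ Even μ₃) ∨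
        (¬ Even R₁ ∧ ¬ Even R₂ ∧ Even μ₃))
    (r₁ s₁ r₂ s₂ : ℕ) (hr₁ : 0 < r₁) (hs₁ : 0 < s₁) (hr₂ : 0 < r₂) (hs₂ : 0 < s₂)
    (hr₁c : Nat.gcd r₁ N₁ = 1) (hs₁c : Nat.gcd s₁ N₁ = 1)
    (hr₂c : Nat.gcd r₂ N₂ = 1) (hs₂c : Nat.gcd s₂ N₂ = 1)
    (hrs₁ : (r₁ : ℤ) ^ 2 ≡ (s₁ : ℤ) ^ 2 [ZMOD (2 * N₁)])
    (hrs₂ : (r₂ : ℤ) ^ 2 ≡ (s₂ : ℤ) ^ 2 [ZMOD (2 * N₂)])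
    -- the quadratic form `Q(x,y) = σ₁x² + 2σ₂xy + σ₃y²` with `σ₁ = R₁μ₁`, `σ₃ = R₂μ₃`
    (Q : ℚ → ℚ → ℚ)
    (hQ : ∀ x y : ℚ, Q x y = (R₁ * μ₁ : ℕ) * x ^ 2 + 2 * σ₂ * x * y + (R₂ * μ₃ : ℕ) * y ^ 2)
    -- `Q` is positive definite
    (hσ₁pos : 0 < (R₁ * μ₁ : ℚ)) (hdisc : 0 < (R₁ * μ₁ : ℚ) * (R₂ * μ₃ : ℚ) - σ₂ ^ 2)
    (h : ℤ) (k : ℕ) (hk : 0 < k) (hhk : Int.gcd h (k : ℤ) = 1)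
    -- `W t α₁ α₂ n` is the general term `e^{2πi(h/k)·L·Q(n+α)} · e^{−t·L·Q(n+α)}`
    (W : ℝ → ℚ → ℚ → ℕ × ℕ → ℂ)
    (hW : ∀ (t : ℝ) (α₁ α₂ : ℚ) (n : ℕ × ℕ),
      W t α₁ α₂ n = eQ ((h : ℚ) / (k : ℚ) * L * Q ((n.1 : ℚ) + α₁) ((n.2 : ℚ) + α₂)) *
        Real.exp (-t * ((L : ℝ) * (Q ((n.1 : ℚ) + α₁) ((n.2 : ℚ) + α₂) : ℝ)))) :
    (∀ t : ℝ, 0 < t → ∀ i j : Fin 2,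
      Summable (fun n : ℕ × ℕ => ‖W t (pt r₁ N₁ i) (pt r₂ N₂ j) n‖) ∧
      Summable (fun n : ℕ × ℕ => ‖W t (pt s₁ N₁ i) (pt s₂ N₂ j) n‖) ∧
      Summable (fun n : ℕ × ℕ => ‖W t (pt r₁ N₁ i) (pt s₂ N₂ j) n‖) ∧
      Summable (fun n : ℕ × ℕ => ‖W t (pt s₁ N₁ i) (pt r₂ N₂ j) n‖)) ∧
    ∃ c : ℂ, Tendsto (fun t : ℝ =>
        (∑ i : Fin 2, ∑ j : Fin 2,
          ((∑' n : ℕ × ℕ, W t (pt r₁ N₁ i) (pt r₂ N₂ j) n) +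
            ∑' n : ℕ × ℕ, W t (pt s₁ N₁ i) (pt s₂ N₂ j) n)) -
        (∑ i : Fin 2, ∑ j : Fin 2,
          ((∑' n : ℕ × ℕ, W t (pt r₁ N₁ i) (pt s₂ N₂ j) n) +
            ∑' n : ℕ × ℕ, W t (pt s₁ N₁ i) (pt r₂ N₂ j) n)))
      (𝓝[>] (0 : ℝ)) (𝓝 c) := by
  have hLe : Even L := hL ▸ even_iff_two_dvd.2 (Nat.dvd_gcd hN₁e.two_dvd hN₂e.two_dvd)
  have hLpos : 0 < L := hL ▸ Nat.gcd_pos_of_pos_left _ hN₁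
  exact radial_limit_exists_general N₁ N₂ L μ₁ μ₃ hN₁ hN₂
    (isNondegenerate_of_coprime hLe hR₁ hR₂ hcop₁ hcop₃ hLμ (by tauto))
    (.of_factorization hLpos hR₁ hR₂ hσ₂ hσ₁pos hdisc) r₁ s₁ r₂ s₂ hr₁c hr₂c hrs₁ hrs₂ Q
    (fun x y => by rw [hQ, hσ₂, hR₁, hR₂, binaryForm]; push_cast; ring) h k hk hhk W hW
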